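/- Fix integers k ≥ 0 and d ≥ 1, and let F : ℂ^{k+1} → ℂ^{k+1} be a map each of whose components is a homogeneous polynomial of degree d in k+1 variables, such that the only common zero of the components is 0. Then for every x ∈ ℂ^{k+1} and every complex-analytic function φ defined on a neighborhood of F(x) with ord_{F(x)}(φ) < ∞, one has ord_x(φ ∘ F) ≤ (k+1)·d·ord_{F(x)}(φ). -/

import Mathlib

/-- The order of vanishing of a function at a point: the smallest `n ∈ ℕ` such that the
`n`-th iterated Fréchet derivative of `f` at `p` is nonzero, as an element of `ℕ∞`
(so it is `⊤` when all iterated derivatives vanish). -/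
noncomputable def ordAt {E F : Type*} [NormedAddCommGroup E] [NormedSpace ℂ E]
    [NormedAddCommGroup F] [NormedSpace ℂ F] (f : E → F) (p : E) : ℕ∞ :=
  sInf ((fun n : ℕ => (n : ℕ∞)) '' {n : ℕ | iteratedFDeriv ℂ n f p ≠ 0})

/-!
For a holomorphic map `F` of a finite-dimensional space to itself, multiplying the chain rule
`D(φ ∘ F) = (Dφ ∘ F) ∘ DF` by the adjugate of `DF` gives
`det DF • (Dφ ∘ F) = D(φ ∘ F) ∘ adj DF`. Orders of vanishing add under products, as one sees on a
line along which neither leading form vanishes, and differentiating lowers them by at most one, so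
`ord (φ ∘ F) ≤ ord (Dφ ∘ F) + ord (det DF) + 1`. Iterating on `φ`, `Dφ`, `D²φ`, … (whence the
vector-valued `φ`) until the derivative is nonzero at `F x` yields
`ord_x (φ ∘ F) ≤ (ord_x (det DF) + 1) * ord_{F x} φ`.

For a homogeneous polynomial map, `det DF` is a homogeneous polynomial of degree
`∑ i, (d i - 1)`, which bounds its order as soon as it is not zero. If the only common zero of the
components is `0`, the Nullstellensatz and induction on the degree make the polynomial ring finite
over the subalgebra that they generate. A kernel vector of the Jacobian matrix would be a derivation
killing this subalgebra, hence, in characteristic zero, killing every polynomial.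
-/

section Lines

variable {𝕜 E G : Type*} [NontriviallyNormedField 𝕜] [NormedAddCommGroup E] [NormedSpace 𝕜 E]
  [NormedAddCommGroup G] [NormedSpace 𝕜 G] {f : E → G} {p : E}

theorem analyticAt_comp_line (hf : AnalyticAt 𝕜 f p) (v : E) :
    AnalyticAt 𝕜 (fun t : 𝕜 ↦ f (p + t • v)) 0 :=
  AnalyticAt.fun_comp (g := f) (by simpa using hf) (by fun_prop)

theorem iteratedDeriv_comp_line [CompleteSpace G] (hf : AnalyticAt 𝕜 f p) (v : E) (n : ℕ) :
    iteratedDeriv n (fun t : 𝕜 ↦ f (p + t • v)) 0 = iteratedFDeriv 𝕜 n f p fun _ ↦ v := by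
  obtain ⟨q, hq⟩ := hf
  let u : 𝕜 →L[𝕜] E := .toSpanSingleton 𝕜 v
  have hqu : HasFPowerSeriesAt (fun z ↦ f (z - -p)) q (u 0) := by simpa using hq.comp_sub (-p)
  obtain ⟨r, hr⟩ := hq
  obtain ⟨r', hr'⟩ := hqu.compContinuousLinearMap
  have line_eq : (fun t : 𝕜 ↦ f (p + t • v)) = (fun z ↦ f (z - -p)) ∘ u := by
    funext t
    simp [u, add_comm]
  rw [iteratedDeriv_eq_iteratedFDeriv, line_eq, ← hr'.factorial_smul, ← hr.factorial_smul,
    FormalMultilinearSeries.compContinuousLinearMap_apply]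
  simp [u, Function.comp_def]

theorem exists_iteratedFDeriv_diagonal_ne_zero [CharZero 𝕜] [CompleteSpace G]
    (hf : AnalyticAt 𝕜 f p) {n : ℕ} (hn : iteratedFDeriv 𝕜 n f p ≠ 0) :
    ∃ v, (iteratedFDeriv 𝕜 n f p fun _ ↦ v) ≠ 0 := by
  contrapose! hn
  obtain ⟨q, r, hq⟩ := hf
  have diagonal_eq_zero : (fun v : E ↦ q n fun _ ↦ v) = 0 := by
    funext v
    have : (n.factorial : 𝕜) • (q n fun _ ↦ v) = 0 := by
      rw [Nat.cast_smul_eq_nsmul, hq.factorial_smul, hn v]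
    simpa [Nat.factorial_ne_zero] using this
  ext v
  rw [hq.iteratedFDeriv_eq_sum_of_completeSpace, ← (q n).iteratedFDeriv_comp_diagonal 0 v,
    diagonal_eq_zero]
  simp

theorem exists_diagonal_ne_zero_and_diagonal_ne_zero [PreconnectedSpace 𝕜] {m n : ℕ}
    {A : E [×m]→L[𝕜] 𝕜} {B : E [×n]→L[𝕜] G} (hA : ∃ v, A (fun _ ↦ v) ≠ 0)
    (hB : ∃ v, B (fun _ ↦ v) ≠ 0) : ∃ v, A (fun _ ↦ v) ≠ 0 ∧ B (fun _ ↦ v) ≠ 0 := by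
  obtain ⟨v, hv⟩ := hA
  obtain ⟨w, hw⟩ := hB
  by_contra! hvw
  let line (t : 𝕜) : E := v + t • (w - v)
  have analyticAt_line {k : ℕ} (t : 𝕜) : AnalyticAt 𝕜 (fun t (_ : Fin k) ↦ line t) t :=
    .pi fun _ ↦ by fun_prop
  have hAB : (∀ t ∈ Set.univ, A (fun _ ↦ line t) = 0) ∨ ∀ t ∈ Set.univ, B (fun _ ↦ line t) = 0 :=
    AnalyticOnNhd.eq_zero_or_eq_zero_of_smul_eq_zero
      (fun t _ ↦ A.analyticAt.fun_comp (analyticAt_line t))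
      (fun t _ ↦ B.analyticAt.fun_comp (analyticAt_line t))
      (fun t _ ↦ smul_eq_zero.2 <| or_iff_not_imp_left.2 <| hvw _) isPreconnected_univ
  rcases hAB with h | h
  · exact hv (by simpa [line] using h 0 (Set.mem_univ _))
  · exact hw (by simpa [line] using h 1 (Set.mem_univ _))

end Lines

section OrdAt

variable {E G : Type*} [NormedAddCommGroup E] [NormedSpace ℂ E]
  [NormedAddCommGroup G] [NormedSpace ℂ G] {f g : E → G} {p : E} {n : ℕ}

theorem natCast_le_ordAt_iff : (n : ℕ∞) ≤ ordAt f p ↔ ∀ i < n, iteratedFDeriv ℂ i f p = 0 := by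
  simp only [ordAt, le_sInf_iff, Set.forall_mem_image, Set.mem_ofPred_eq, Nat.cast_le]
  exact forall_congr' fun i ↦ by rw [← not_lt]; exact not_imp_not

theorem natCast_succ_le_ordAt_iff :
    ((n + 1 : ℕ) : ℕ∞) ≤ ordAt f p ↔ f p = 0 ∧ (n : ℕ∞) ≤ ordAt (fderiv ℂ f) p := by
  have iteratedFDeriv_zero_iff : iteratedFDeriv ℂ 0 f p = 0 ↔ f p = 0 := by
    rw [← norm_eq_zero, norm_iteratedFDeriv_zero, norm_eq_zero]
  have iteratedFDeriv_succ_iff (i : ℕ) :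
      iteratedFDeriv ℂ (i + 1) f p = 0 ↔ iteratedFDeriv ℂ i (fderiv ℂ f) p = 0 := by
    rw [← norm_eq_zero, ← norm_iteratedFDeriv_fderiv, norm_eq_zero]
  simp only [natCast_le_ordAt_iff, Nat.forall_lt_succ_left, iteratedFDeriv_zero_iff,
    iteratedFDeriv_succ_iff]

theorem iteratedFDeriv_ne_zero_of_ordAt_eq (h : ordAt f p = n) : iteratedFDeriv ℂ n f p ≠ 0 := by
  intro hn
  have succ_le : ((n + 1 : ℕ) : ℕ∞) ≤ ordAt f p :=
    natCast_le_ordAt_iff.2 <| Nat.forall_lt_succ_right.2 ⟨natCast_le_ordAt_iff.1 h.ge, hn⟩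
  rw [h, Nat.cast_le] at succ_le
  exact Nat.not_succ_le_self n succ_le

theorem ordAt_congr (h : f =ᶠ[nhds p] g) : ordAt f p = ordAt g p := by
  simp only [ordAt, (h.iteratedFDeriv ℂ _).eq_of_nhds]

theorem ordAt_eq_zero_iff : ordAt f p = 0 ↔ f p ≠ 0 := by
  rw [← not_iff_not, not_not, ← ne_eq, ← Order.one_le_iff_ne_zero]
  simpa using natCast_succ_le_ordAt_iff (f := f) (p := p) (n := 0)

theorem ordAt_fderiv_add_one (h : f p = 0) : ordAt (fderiv ℂ f) p + 1 = ordAt f p := by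
  refine ENat.eq_of_forall_natCast_le_iff fun n ↦ ?_
  cases n with
  | zero => simp
  | succ n => rw [natCast_succ_le_ordAt_iff]; simp [h]

theorem ordAt_le_ordAt_fderiv_add_one : ordAt f p ≤ ordAt (fderiv ℂ f) p + 1 := by
  by_cases h : f p = 0
  · exact (ordAt_fderiv_add_one h).ge
  · simp [ordAt_eq_zero_iff.2 h]

variable [CompleteSpace G]

theorem natCast_le_ordAt_iff_forall_line (hf : AnalyticAt ℂ f p) :
    (n : ℕ∞) ≤ ordAt f p ↔ ∀ v, n ≤ analyticOrderAt (fun t : ℂ ↦ f (p + t • v)) 0 := by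
  simp only [natCast_le_analyticOrderAt_iff_iteratedDeriv_eq_zero (analyticAt_comp_line hf _),
    iteratedDeriv_comp_line hf, natCast_le_ordAt_iff]
  refine ⟨fun h v i hi ↦ by simp [h i hi], fun h i hi ↦ ?_⟩
  contrapose! h
  obtain ⟨v, hv⟩ := exists_iteratedFDeriv_diagonal_ne_zero hf h
  exact ⟨v, i, hi, hv⟩

theorem ordAt_le_analyticOrderAt_line (hf : AnalyticAt ℂ f p) (v : E) :
    ordAt f p ≤ analyticOrderAt (fun t : ℂ ↦ f (p + t • v)) 0 :=
  ENat.forall_natCast_le_iff_le.1 fun _ hn ↦ (natCast_le_ordAt_iff_forall_line hf).1 hn v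

theorem analyticOrderAt_line_le (hf : AnalyticAt ℂ f p) {v : E}
    (hv : (iteratedFDeriv ℂ n f p fun _ ↦ v) ≠ 0) :
    analyticOrderAt (fun t : ℂ ↦ f (p + t • v)) 0 ≤ n := by
  contrapose! hv
  rw [← iteratedDeriv_comp_line hf]
  have succ_le : ((n + 1 : ℕ) : ℕ∞) ≤ analyticOrderAt (fun t : ℂ ↦ f (p + t • v)) 0 :=
    mod_cast Order.add_one_le_of_lt hv
  exact (natCast_le_analyticOrderAt_iff_iteratedDeriv_eq_zero (analyticAt_comp_line hf v)).1
    succ_le n n.lt_succ_self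

theorem ordAt_le_ordAt_bilinear {H K : Type*} [NormedAddCommGroup H] [NormedSpace ℂ H]
    [NormedAddCommGroup K] [NormedSpace ℂ K] [CompleteSpace K] (B : G →L[ℂ] H →L[ℂ] K)
    {h : E → H} (hf : AnalyticAt ℂ f p) (hh : AnalyticAt ℂ h p) :
    ordAt f p ≤ ordAt (fun y ↦ B (f y) (h y)) p := by
  have hB : AnalyticAt ℂ (fun y ↦ B (f y) (h y)) p :=
    (B.analyticAt_bilinear (f p, h p)).comp₂ hf hh
  refine ENat.forall_natCast_le_iff_le.1 fun n hn ↦ ?_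
  refine (natCast_le_ordAt_iff_forall_line hB).2 fun v ↦ ?_
  obtain ⟨k, hk, hfk⟩ := (natCast_le_analyticOrderAt (analyticAt_comp_line hf v)).1
    ((natCast_le_ordAt_iff_forall_line hf).1 hn v)
  refine (natCast_le_analyticOrderAt (analyticAt_comp_line hB v)).2
    ⟨fun t ↦ B (k t) (h (p + t • v)),
      (B.analyticAt_bilinear _).comp₂ hk (analyticAt_comp_line hh v), ?_⟩
  filter_upwards [hfk] with t ht
  simp [ht]

theorem ordAt_smul_le {c : E → ℂ} (hc : AnalyticAt ℂ c p) (hf : AnalyticAt ℂ f p) :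
    ordAt (c • f) p ≤ ordAt c p + ordAt f p := by
  rcases eq_or_ne (ordAt c p) ⊤ with hct | hct
  · simp [hct]
  rcases eq_or_ne (ordAt f p) ⊤ with hft | hft
  · simp [hft]
  obtain ⟨m, hm⟩ := ENat.ne_top_iff_exists.1 hct
  obtain ⟨n, hn⟩ := ENat.ne_top_iff_exists.1 hft
  obtain ⟨v, hcv, hfv⟩ := exists_diagonal_ne_zero_and_diagonal_ne_zero
    (exists_iteratedFDeriv_diagonal_ne_zero hc (iteratedFDeriv_ne_zero_of_ordAt_eq hm.symm))
    (exists_iteratedFDeriv_diagonal_ne_zero hf (iteratedFDeriv_ne_zero_of_ordAt_eq hn.symm))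
  calc ordAt (c • f) p
      ≤ analyticOrderAt ((fun t : ℂ ↦ c (p + t • v)) • fun t : ℂ ↦ f (p + t • v)) 0 :=
        ordAt_le_analyticOrderAt_line (hc.smul hf) v
    _ = analyticOrderAt (fun t : ℂ ↦ c (p + t • v)) 0
          + analyticOrderAt (fun t : ℂ ↦ f (p + t • v)) 0 :=
        analyticOrderAt_smul (analyticAt_comp_line hc v) (analyticAt_comp_line hf v)
    _ ≤ m + n := add_le_add (analyticOrderAt_line_le hc hcv) (analyticOrderAt_line_le hf hfv)
    _ = ordAt c p + ordAt f p := by rw [hm, hn]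

end OrdAt

section Determinant

variable {𝕜 E H : Type*} [NontriviallyNormedField 𝕜] [NormedAddCommGroup E] [NormedSpace 𝕜 E]
  [NormedAddCommGroup H] [NormedSpace 𝕜 H]

theorem analyticAt_matrix_det {n : Type*} [Fintype n] [DecidableEq n] {M : H → Matrix n n 𝕜}
    {z : H} (hM : ∀ i j, AnalyticAt 𝕜 (fun y ↦ M y i j) z) :
    AnalyticAt 𝕜 (fun y ↦ (M y).det) z := by
  simp only [Matrix.det_apply']
  exact Finset.analyticAt_fun_sum _ fun σ _ ↦ analyticAt_const.mul <|
    Finset.analyticAt_fun_prod _ fun i _ ↦ hM _ _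

theorem analyticAt_matrix_adjugate {n : Type*} [Fintype n] [DecidableEq n] {M : H → Matrix n n 𝕜}
    {z : H} (hM : ∀ i j, AnalyticAt 𝕜 (fun y ↦ M y i j) z) (i j : n) :
    AnalyticAt 𝕜 (fun y ↦ (M y).adjugate i j) z := by
  simp only [Matrix.adjugate_apply]
  refine analyticAt_matrix_det fun k l ↦ ?_
  rcases eq_or_ne k j with rfl | hk
  · simpa using analyticAt_const
  · simpa [Matrix.updateRow_ne hk] using hM k l

variable [CompleteSpace 𝕜] [FiniteDimensional 𝕜 E]

theorem analyticAt_toMatrix_apply {n : Type*} [Fintype n] [DecidableEq n] (b : Module.Basis n 𝕜 E)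
    (L : E →L[𝕜] E) (i j : n) :
    AnalyticAt 𝕜 (fun L : E →L[𝕜] E ↦ LinearMap.toMatrix b b (L : E →ₗ[𝕜] E) i j) L := by
  let entry : (E →L[𝕜] E) →L[𝕜] 𝕜 :=
    LinearMap.toContinuousLinearMap (b.coord i) ∘L .apply 𝕜 E (b j)
  have entry_eq : (fun L : E →L[𝕜] E ↦ LinearMap.toMatrix b b (L : E →ₗ[𝕜] E) i j) = entry := by
    funext L
    simp [entry, LinearMap.toMatrix_apply]
  exact entry_eq ▸ entry.analyticAt L

theorem analyticAt_continuousLinearMap_det (L : E →L[𝕜] E) :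
    AnalyticAt 𝕜 (fun L : E →L[𝕜] E ↦ L.det) L := by
  simp only [ContinuousLinearMap.det, ← LinearMap.det_toMatrix (Module.finBasis 𝕜 E)]
  exact analyticAt_matrix_det (analyticAt_toMatrix_apply _ L)

variable (𝕜 E) in
theorem exists_analytic_comp_eq_det_smul_id : ∃ A : (E →L[𝕜] E) → (E →L[𝕜] E),
    (∀ L, AnalyticAt 𝕜 A L) ∧ ∀ L, L ∘L A L = L.det • .id 𝕜 E := by
  let b := Module.finBasis 𝕜 E
  let adj (L : E →L[𝕜] E) := (LinearMap.toMatrix b b (L : E →ₗ[𝕜] E)).adjugate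
  let unit i j : E →L[𝕜] E :=
    LinearMap.toContinuousLinearMap (Matrix.toLin b b (Matrix.single i j 1))
  have sum_eq (L) : ∑ i, ∑ j, adj L i j • unit i j =
      LinearMap.toContinuousLinearMap (Matrix.toLin b b (adj L)) := by
    conv_rhs => rw [Matrix.matrix_eq_sum_single (adj L)]
    simp only [map_sum, unit, ← map_smul, Matrix.smul_single, smul_eq_mul, mul_one]
  refine ⟨fun L ↦ ∑ i, ∑ j, adj L i j • unit i j, fun L ↦ ?_, fun L ↦ ?_⟩
  · refine Finset.analyticAt_fun_sum _ fun i _ ↦ Finset.analyticAt_fun_sum _ fun j _ ↦ ?_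
    exact (analyticAt_matrix_adjugate (analyticAt_toMatrix_apply b L) i j).smul analyticAt_const
  · apply ContinuousLinearMap.coe_injective
    apply (LinearMap.toMatrix b b).injective
    simp [sum_eq, LinearMap.toMatrix_comp b b b, adj, Matrix.mul_adjugate, ContinuousLinearMap.det]

end Determinant

section Composition

universe u

variable {E G : Type u} [NormedAddCommGroup E] [NormedSpace ℂ E] [FiniteDimensional ℂ E]
  [NormedAddCommGroup G] [NormedSpace ℂ G] [CompleteSpace G] {F : E → E} {φ : E → G} {x : E}

theorem ordAt_comp_le_ordAt_fderiv_comp_add (hF : AnalyticAt ℂ F x) (hφ : AnalyticAt ℂ φ (F x)) :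
    ordAt (φ ∘ F) x ≤
      ordAt (fderiv ℂ φ ∘ F) x + (ordAt (fun y ↦ (fderiv ℂ F y).det) x + 1) := by
  have : CompleteSpace E := FiniteDimensional.complete ℂ E
  obtain ⟨adj, analyticAt_adj, comp_adj⟩ := exists_analytic_comp_eq_det_smul_id ℂ E
  have chain_rule : (fun y ↦ fderiv ℂ (φ ∘ F) y ∘L adj (fderiv ℂ F y)) =ᶠ[nhds x]
      (fun y ↦ (fderiv ℂ F y).det) • (fderiv ℂ φ ∘ F) := by
    filter_upwards [hF.eventually_analyticAt,
      hF.continuousAt.eventually hφ.eventually_analyticAt] with y hFy hφy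
    rw [fderiv_comp y hφy.differentiableAt hFy.differentiableAt, ContinuousLinearMap.comp_assoc,
      comp_adj]
    ext v
    simp
  calc ordAt (φ ∘ F) x
      ≤ ordAt (fderiv ℂ (φ ∘ F)) x + 1 := ordAt_le_ordAt_fderiv_add_one
    _ ≤ ordAt (fun y ↦ fderiv ℂ (φ ∘ F) y ∘L adj (fderiv ℂ F y)) x + 1 := by
        gcongr
        exact ordAt_le_ordAt_bilinear (.compL ℂ E E G) (hφ.comp hF).fderiv
          ((analyticAt_adj _).comp hF.fderiv)
    _ = ordAt ((fun y ↦ (fderiv ℂ F y).det) • (fderiv ℂ φ ∘ F)) x + 1 := by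
        rw [ordAt_congr chain_rule]
    _ ≤ ordAt (fun y ↦ (fderiv ℂ F y).det) x + ordAt (fderiv ℂ φ ∘ F) x + 1 := by
        gcongr
        exact ordAt_smul_le ((analyticAt_continuousLinearMap_det _).comp hF.fderiv)
          (hφ.fderiv.comp hF)
    _ = ordAt (fderiv ℂ φ ∘ F) x + (ordAt (fun y ↦ (fderiv ℂ F y).det) x + 1) := by ring

theorem ordAt_comp_le (hF : AnalyticAt ℂ F x) (hφ : AnalyticAt ℂ φ (F x)) :
    ordAt (φ ∘ F) x ≤ (ordAt (fun y ↦ (fderiv ℂ F y).det) x + 1) * ordAt φ (F x) := by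
  rcases eq_or_ne (ordAt φ (F x)) ⊤ with htop | hfin
  · simp [htop]
  obtain ⟨m, hm⟩ := ENat.ne_top_iff_exists.1 hfin
  induction m generalizing G with
  | zero =>
    have φ_ne_zero : φ (F x) ≠ 0 := ordAt_eq_zero_iff.1 hm.symm
    have ord_comp : ordAt (φ ∘ F) x = 0 := ordAt_eq_zero_iff.2 φ_ne_zero
    simp [ord_comp]
  | succ m ih =>
    have φ_eq_zero : φ (F x) = 0 := (natCast_succ_le_ordAt_iff.1 hm.le).1
    have ord_fderiv : ordAt (fderiv ℂ φ) (F x) = m := by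
      have add_one_eq := (ordAt_fderiv_add_one φ_eq_zero).trans hm.symm
      exact WithTop.add_right_cancel ENat.one_ne_top (add_one_eq.trans (Nat.cast_succ m))
    calc ordAt (φ ∘ F) x
        ≤ ordAt (fderiv ℂ φ ∘ F) x + (ordAt (fun y ↦ (fderiv ℂ F y).det) x + 1) :=
          ordAt_comp_le_ordAt_fderiv_comp_add hF hφ
      _ ≤ (ordAt (fun y ↦ (fderiv ℂ F y).det) x + 1) * ordAt (fderiv ℂ φ) (F x)
            + (ordAt (fun y ↦ (fderiv ℂ F y).det) x + 1) := by
          gcongr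
          exact ih hφ.fderiv (by simp [ord_fderiv]) ord_fderiv.symm
      _ = (ordAt (fun y ↦ (fderiv ℂ F y).det) x + 1) * ordAt φ (F x) := by
          rw [← ordAt_fderiv_add_one φ_eq_zero, mul_add, mul_one]

end Composition

section PolynomialMaps

open MvPolynomial

section PolynomialOrder

theorem analyticOrderAt_polynomial_eval {𝕜 : Type*} [NontriviallyNormedField 𝕜]
    {q : Polynomial 𝕜} (hq : q ≠ 0) (a : 𝕜) :
    analyticOrderAt (fun t ↦ q.eval t) a = q.rootMultiplicity a := by
  obtain ⟨r, hqr, hr⟩ := Polynomial.exists_eq_pow_rootMultiplicity_mul_and_not_dvd q hq a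
  have analyticAt_eval (s : Polynomial 𝕜) : AnalyticAt 𝕜 (fun t ↦ s.eval t) a :=
    AnalyticOnNhd.eval_polynomial s a (Set.mem_univ a)
  refine (analyticAt_eval q).analyticOrderAt_eq_natCast.2
    ⟨fun t ↦ r.eval t, analyticAt_eval r, fun h ↦ hr (Polynomial.dvd_iff_isRoot.2 h), ?_⟩
  refine .of_forall fun t ↦ ?_
  conv_lhs => rw [hqr]
  simp

theorem exists_polynomial_eval_eq_eval_line {R σ : Type*} [CommRing R] (p : MvPolynomial σ R)
    (x v : σ → R) :
    ∃ q : Polynomial R, q.natDegree ≤ p.totalDegree ∧ ∀ t, q.eval t = eval (x + t • v) p := by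
  let line (i : σ) : Polynomial R := .C (v i) * .X + .C (x i)
  have natDegree_line (i : σ) : (line i).natDegree ≤ 1 := Polynomial.natDegree_linear_le
  refine ⟨aeval line p, ?_, fun t ↦ ?_⟩
  · simpa using aeval_natDegree_le p le_rfl line natDegree_line
  · have eval_line : (fun i ↦ (line i).eval t) = x + t • v := by
      funext i
      simp [line, add_comm (x i), mul_comm (v i)]
    rw [← eval_line, aeval_def, polynomial_eval_eval₂, eval, coe_eval₂Hom]
    congr 1
    ext r
    simp

theorem ordAt_eval_le_totalDegree {σ : Type*} [Fintype σ] {p : MvPolynomial σ ℂ} (hp : p ≠ 0)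
    (x : σ → ℂ) : ordAt (fun y ↦ eval y p) x ≤ p.totalDegree := by
  obtain ⟨y, hy⟩ : ∃ y, eval y p ≠ 0 := by
    contrapose! hp
    exact MvPolynomial.funext (by simpa using hp)
  obtain ⟨q, natDegree_le, eval_q⟩ := exists_polynomial_eval_eq_eval_line p x (y - x)
  have q_ne_zero : q ≠ 0 := by
    rintro rfl
    exact hy (by simpa using (eval_q 1).symm)
  calc ordAt (fun y ↦ eval y p) x
      ≤ analyticOrderAt (fun t : ℂ ↦ eval (x + t • (y - x)) p) 0 :=
        ordAt_le_analyticOrderAt_line (AnalyticOnNhd.eval_mvPolynomial p x (Set.mem_univ x)) _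
    _ = q.rootMultiplicity 0 := by simp only [← eval_q, analyticOrderAt_polynomial_eval q_ne_zero]
    _ ≤ p.totalDegree := by
        rw [← Polynomial.count_roots]
        exact mod_cast (q.roots.count_le_card 0).trans (q.card_roots'.trans natDegree_le)

end PolynomialOrder

section Jacobian

/-- The polynomial map `R^σ → R^ι` with components `P i`; for `P` homogeneous and without common
zeros other than `0`, this is a lift of a self-map of projective space. -/
noncomputable def polyMap {R σ ι : Type*} [CommSemiring R] (P : ι → MvPolynomial σ R)
    (x : σ → R) : ι → R :=
  fun i ↦ eval x (P i)

/-- The formal Jacobian matrix of `polyMap P`, whose determinant is a polynomial, so that its degree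
and nonvanishing can be discussed. Rows are indexed by the components, columns by the variables. -/
noncomputable def jacobianMatrix {R σ ι : Type*} [CommSemiring R] (P : ι → MvPolynomial σ R) :
    Matrix ι σ (MvPolynomial σ R) :=
  .of fun i j ↦ pderiv j (P i)

variable {𝕜 σ ι : Type*} [NontriviallyNormedField 𝕜] [Fintype σ]

theorem hasFDerivAt_mvPolynomial_eval (p : MvPolynomial σ 𝕜) (y : σ → 𝕜) :
    HasFDerivAt (fun z ↦ eval z p)
      (∑ j, eval y (pderiv j p) • ContinuousLinearMap.proj (R := 𝕜) (φ := fun _ : σ ↦ 𝕜) j) y := by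
  classical
  induction p using MvPolynomial.induction_on with
  | C a =>
    simp only [eval_C]
    refine (hasFDerivAt_const a y).congr_fderiv ?_
    ext v
    simp
  | add p q hp hq =>
    simp only [map_add]
    refine (hp.fun_add hq).congr_fderiv ?_
    ext v
    simp [add_mul, Finset.sum_add_distrib]
  | mul_X p i hp =>
    simp only [map_mul, eval_X]
    refine (hp.fun_mul (hasFDerivAt_apply i y)).congr_fderiv ?_
    ext v
    simp [Derivation.leibniz, pderiv_X, Finset.sum_add_distrib, add_mul, Finset.mul_sum, mul_assoc,
      Pi.single_apply, apply_ite]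

theorem analyticAt_polyMap [CompleteSpace 𝕜] [Fintype ι] (P : ι → MvPolynomial σ 𝕜) (x : σ → 𝕜) :
    AnalyticAt 𝕜 (polyMap P) x :=
  .pi fun i ↦ AnalyticOnNhd.eval_mvPolynomial (P i) x (Set.mem_univ x)

theorem fderiv_polyMap [DecidableEq σ] (P : ι → MvPolynomial σ 𝕜) (x : σ → 𝕜) :
    (fderiv 𝕜 (polyMap P) x : (σ → 𝕜) →ₗ[𝕜] ι → 𝕜) =
      Matrix.toLin' ((jacobianMatrix P).map (eval x)) := by
  have hasFDerivAt : HasFDerivAt (polyMap P) _ x :=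
    hasFDerivAt_pi.2 fun i ↦ hasFDerivAt_mvPolynomial_eval (P i) x
  rw [hasFDerivAt.fderiv]
  ext v i
  simp [jacobianMatrix, Matrix.mulVec, dotProduct]

theorem det_fderiv_polyMap [DecidableEq σ] (P : σ → MvPolynomial σ 𝕜) (x : σ → 𝕜) :
    (fderiv 𝕜 (polyMap P) x).det = eval x (jacobianMatrix P).det := by
  rw [ContinuousLinearMap.det, fderiv_polyMap, LinearMap.det_toLin', RingHom.map_det,
    RingHom.mapMatrix_apply]

theorem isHomogeneous_det_jacobianMatrix {R : Type*} [CommRing R] [DecidableEq σ]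
    {P : σ → MvPolynomial σ R} {d : σ → ℕ} (hP : ∀ i, (P i).IsHomogeneous (d i)) :
    (jacobianMatrix P).det.IsHomogeneous (∑ i, (d i - 1)) := by
  rw [Matrix.det_apply]
  refine IsHomogeneous.sum _ _ _ fun τ _ ↦ ?_
  rw [← Equiv.sum_comp τ]
  exact (homogeneousSubmodule σ R _).smul_of_tower_mem _
    (IsHomogeneous.prod _ _ _ fun i _ ↦ (hP (τ i)).pderiv)

end Jacobian

section Finiteness

variable {R σ ι : Type*} [CommRing R]

attribute [local instance] MvPolynomial.gradedAlgebra in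
theorem homogeneousComponent_mul_of_isHomogeneous_right (a : MvPolynomial σ R)
    {b : MvPolynomial σ R} {m n : ℕ} (hb : b.IsHomogeneous m) (hmn : m ≤ n) :
    homogeneousComponent n (a * b) = homogeneousComponent (n - m) a * b := by
  simpa only [← decomposition.decompose'_apply] using!
    DirectSum.coe_decompose_mul_of_right_mem_of_le (homogeneousSubmodule σ R) (a := a) hb hmn

variable {P : ι → MvPolynomial σ R} {d : ι → ℕ}

theorem exists_isHomogeneous_coeff_of_mem_span [Fintype ι]
    (hP : ∀ i, (P i).IsHomogeneous (d i)) {n : ℕ} (hn : ∀ i, d i ≤ n) {f : MvPolynomial σ R}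
    (hf : f.IsHomogeneous n) (hfP : f ∈ Ideal.span (Set.range P)) :
    ∃ a : ι → MvPolynomial σ R, (∀ i, (a i).IsHomogeneous (n - d i)) ∧ ∑ i, a i * P i = f := by
  obtain ⟨a, rfl⟩ := Ideal.mem_span_range_iff_exists_fun.1 hfP
  refine ⟨fun i ↦ homogeneousComponent (n - d i) (a i),
    fun i ↦ homogeneousComponent_isHomogeneous _ _, ?_⟩
  rw [← homogeneousComponent_eq_self hf, map_sum]
  exact Finset.sum_congr rfl fun i _ ↦
    (homogeneousComponent_mul_of_isHomogeneous_right _ (hP i) (hn i)).symm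

theorem isHomogeneous_mem_pow_idealOfVars {f : MvPolynomial σ R} {m n : ℕ}
    (hf : f.IsHomogeneous n) (hmn : m ≤ n) : f ∈ idealOfVars σ R ^ m := by
  rw [mem_pow_idealOfVars_iff]
  intro s hs
  rwa [Finsupp.degree_apply, ← hf.degree_eq_sum_deg_support hs]

theorem mem_of_isHomogeneous_of_forall_lt_mem [Finite ι]
    (hd : ∀ i, 0 < d i) (hP : ∀ i, (P i).IsHomogeneous (d i))
    {M : Submodule (Algebra.adjoin R (Set.range P)) (MvPolynomial σ R)} {B : ℕ}
    (hBd : ∀ i, d i ≤ B) (hBP : idealOfVars σ R ^ B ≤ Ideal.span (Set.range P))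
    (hM : ∀ n < B, ∀ f : MvPolynomial σ R, f.IsHomogeneous n → f ∈ M) {n : ℕ}
    {f : MvPolynomial σ R} (hf : f.IsHomogeneous n) : f ∈ M := by
  have := Fintype.ofFinite ι
  induction n using Nat.strong_induction_on generalizing f with
  | _ n ih =>
    rcases lt_or_ge n B with hn | hn
    · exact hM n hn f hf
    have hdn (i : ι) : d i ≤ n := (hBd i).trans hn
    obtain ⟨a, ha, rfl⟩ := exists_isHomogeneous_coeff_of_mem_span hP hdn hf
      (hBP (isHomogeneous_mem_pow_idealOfVars hf hn))
    refine M.sum_mem fun i _ ↦ ?_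
    have a_mem : a i ∈ M := ih (n - d i) (Nat.sub_lt ((hd i).trans_le (hdn i)) (hd i)) (ha i)
    rw [mul_comm]
    exact M.smul_mem ⟨P i, Algebra.subset_adjoin ⟨i, rfl⟩⟩ a_mem

theorem finite_adjoin_of_idealOfVars_le_radical [Finite σ] [Finite ι]
    (hd : ∀ i, 0 < d i) (hP : ∀ i, (P i).IsHomogeneous (d i))
    (hrad : idealOfVars σ R ≤ (Ideal.span (Set.range P)).radical) :
    Module.Finite (Algebra.adjoin R (Set.range P)) (MvPolynomial σ R) := by
  have := Fintype.ofFinite ι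
  obtain ⟨k, hk⟩ := Ideal.exists_pow_le_of_le_radical_of_fg hrad (idealOfVars_fg σ R)
  let B := k + ∑ i, d i
  have hBd (i : ι) : d i ≤ B :=
    (Finset.single_le_sum (fun _ _ ↦ zero_le) (Finset.mem_univ i)).trans (Nat.le_add_left _ _)
  have hBP : idealOfVars σ R ^ B ≤ Ideal.span (Set.range P) :=
    (Ideal.pow_le_pow_right (Nat.le_add_right _ _)).trans hk
  obtain ⟨t, ht⟩ : (⨆ n ∈ Finset.range B, homogeneousSubmodule σ R n).FG :=
    Submodule.fg_biSup _ _ fun n _ ↦ homogeneousSubmodule_fg σ R n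
  have low_degree_mem (n : ℕ) (hn : n < B) (f : MvPolynomial σ R) (hf : f.IsHomogeneous n) :
      f ∈ Submodule.span (Algebra.adjoin R (Set.range P)) (t : Set (MvPolynomial σ R)) := by
    refine Submodule.span_le_restrictScalars R _ _ (ht ▸ ?_)
    exact Submodule.mem_iSup_of_mem n (Submodule.mem_iSup_of_mem (Finset.mem_range.2 hn) hf)
  refine ⟨t, eq_top_iff.2 fun f _ ↦ ?_⟩
  rw [← sum_homogeneousComponent f]
  exact Submodule.sum_mem _ fun n _ ↦ mem_of_isHomogeneous_of_forall_lt_mem hd hP hBd hBP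
    low_degree_mem (homogeneousComponent_isHomogeneous n f)

theorem idealOfVars_le_radical_span {K : Type*} [Field K] [IsAlgClosed K] [Finite σ]
    {s : Set (MvPolynomial σ K)} (hs : ∀ x : σ → K, (∀ p ∈ s, eval x p = 0) → x = 0) :
    idealOfVars σ K ≤ (Ideal.span s).radical := by
  rw [← vanishingIdeal_zeroLocus_eq_radical (K := K), idealOfVars, Ideal.span_le]
  rintro _ ⟨j, rfl⟩ x hx
  have x_eq_zero : x = 0 := hs x fun p hp ↦ by
    simpa [aeval_eq_eval] using hx p (Ideal.subset_span hp)
  simp [x_eq_zero]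

end Finiteness

section JacobianCriterion

theorem exists_derivation_subalgebra_coe_eq {R A M : Type*} [CommRing R] [CommRing A] [Algebra R A]
    [AddCommGroup M] [Module R M] [Module A M] (S : Subalgebra R A)
    (D : Derivation R A M) (hD : ∀ a ∈ S, D a = 0) :
    ∃ D' : Derivation S A M, ⇑D' = D := by
  let D' : A →ₗ[S] M :=
    { toFun := D
      map_add' := map_add D
      map_smul' := fun s a ↦ by
        rw [Algebra.smul_def, D.leibniz, Subalgebra.algebraMap_apply, hD s s.2]
        simp [Subalgebra.smul_def] }
  exact ⟨.mk' D' D.leibniz, rfl⟩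

theorem derivation_apply_eq_zero_of_isAlgebraic {S A M : Type*} [CommRing S] [CommRing A]
    [Algebra S A] [FaithfulSMul S A] [AddCommGroup M] [Module S M] [Module A M]
    [IsAddTorsionFree S] [IsDomain A] [Module.IsTorsionFree A M]
    (D : Derivation S A M) {a : A} (ha : IsAlgebraic S a) : D a = 0 := by
  by_contra hDa
  have eq_zero_of_aeval_eq_zero (n : ℕ) (q : Polynomial S) (hn : q.natDegree = n)
      (hqa : Polynomial.aeval a q = 0) : q = 0 := by
    induction n using Nat.strong_induction_on generalizing q with
    | _ n ih =>
      have derivative_root : Polynomial.aeval a q.derivative = 0 := by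
        have derivative_smul : Polynomial.aeval a q.derivative • D a = 0 := by
          rw [← D.map_aeval, hqa, map_zero]
        exact (smul_eq_zero.1 derivative_smul).resolve_right hDa
      have natDegree_eq_zero : q.natDegree = 0 := by
        by_contra hq
        exact hq <| Polynomial.derivative_eq_zero.1 <|
          ih _ (hn ▸ Polynomial.natDegree_derivative_lt hq) _ rfl derivative_root
      rw [Polynomial.eq_C_of_natDegree_eq_zero natDegree_eq_zero] at hqa ⊢
      simpa using hqa
  obtain ⟨q, hq, hqa⟩ := ha
  exact hq (eq_zero_of_aeval_eq_zero _ q rfl hqa)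

theorem mkDerivation_apply_eq_sum_pderiv {R σ A : Type*} [CommSemiring R] [Fintype σ]
    [AddCommMonoid A] [Module R A] [Module (MvPolynomial σ R) A]
    [IsScalarTower R (MvPolynomial σ R) A] (v : σ → A) (p : MvPolynomial σ R) :
    mkDerivation R v p = ∑ j, pderiv j p • v j := by
  classical
  induction p using MvPolynomial.induction_on with
  | C a => simp
  | add p q hp hq => simp only [map_add, hp, hq, add_smul, Finset.sum_add_distrib]
  | mul_X p i hp =>
    simp [Derivation.leibniz, hp, pderiv_X, Pi.single_apply, add_smul, Finset.sum_add_distrib,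
      Finset.smul_sum, mul_smul, ite_smul]

theorem det_jacobianMatrix_ne_zero {R σ : Type*} [CommRing R] [IsDomain R] [CharZero R]
    [Fintype σ] [DecidableEq σ] {P : σ → MvPolynomial σ R}
    (hP : Algebra.IsAlgebraic (Algebra.adjoin R (Set.range P)) (MvPolynomial σ R)) :
    (jacobianMatrix P).det ≠ 0 := by
  intro hdet
  obtain ⟨v, v_ne_zero, hv⟩ := Matrix.exists_mulVec_eq_zero_iff.2 hdet
  have kills_P (i : σ) : mkDerivation R v (P i) = 0 := by
    rw [mkDerivation_apply_eq_sum_pderiv]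
    exact congrFun hv i
  have kills_adjoin : Set.EqOn (mkDerivation R v)
      (0 : Derivation R (MvPolynomial σ R) (MvPolynomial σ R)) (Algebra.adjoin R (Set.range P)) :=
    Derivation.eqOn_adjoin (Set.forall_mem_range.2 kills_P)
  obtain ⟨D, hD⟩ := exists_derivation_subalgebra_coe_eq _ _ kills_adjoin
  refine v_ne_zero (funext fun j ↦ ?_)
  rw [← mkDerivation_X R v j, ← hD]
  exact derivation_apply_eq_zero_of_isAlgebraic D (hP.isAlgebraic (X j))

theorem det_jacobianMatrix_ne_zero_of_forall_eq_zero {K σ : Type*} [Field K] [IsAlgClosed K]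
    [CharZero K] [Fintype σ] [DecidableEq σ] {P : σ → MvPolynomial σ K} {d : σ → ℕ}
    (hd : ∀ i, 0 < d i) (hP : ∀ i, (P i).IsHomogeneous (d i))
    (hzero : ∀ x, polyMap P x = 0 → x = 0) : (jacobianMatrix P).det ≠ 0 := by
  have idealOfVars_le : idealOfVars σ K ≤ (Ideal.span (Set.range P)).radical :=
    idealOfVars_le_radical_span fun x hx ↦ hzero x (funext fun i ↦ hx (P i) ⟨i, rfl⟩)
  have := finite_adjoin_of_idealOfVars_le_radical hd hP idealOfVars_le
  exact det_jacobianMatrix_ne_zero inferInstance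

end JacobianCriterion

universe u in
theorem ord_comp_polynomial_lift_le_general {σ G : Type u} [Fintype σ] [NormedAddCommGroup G]
    [NormedSpace ℂ G] [CompleteSpace G] {P : σ → MvPolynomial σ ℂ} {d : σ → ℕ}
    (hd : ∀ i, 0 < d i) (hP : ∀ i, (P i).IsHomogeneous (d i))
    (hzero : ∀ x, polyMap P x = 0 → x = 0) {x : σ → ℂ} {φ : (σ → ℂ) → G}
    (hφ : AnalyticAt ℂ φ (polyMap P x)) :
    ordAt (φ ∘ polyMap P) x ≤ ((∑ i, (d i - 1) + 1 : ℕ) : ℕ∞) * ordAt φ (polyMap P x) := by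
  classical
  have ord_det_le : ordAt (fun y ↦ (fderiv ℂ (polyMap P) y).det) x ≤ (∑ i, (d i - 1) : ℕ) := by
    simp only [det_fderiv_polyMap]
    have det_ne_zero := det_jacobianMatrix_ne_zero_of_forall_eq_zero hd hP hzero
    exact (ordAt_eval_le_totalDegree det_ne_zero x).trans
      (mod_cast (isHomogeneous_det_jacobianMatrix hP).totalDegree_le)
  refine (ordAt_comp_le (analyticAt_polyMap P x) hφ).trans ?_
  rw [Nat.cast_succ]
  gcongr

end PolynomialMaps

/-- quantitative estimate underlying Proposition 5.2: for a
homogeneous polynomial lift `F` of degree `d ≥ 1` of a holomorphic self-map of `ℙ^k`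
(components homogeneous of degree `d`, only common zero `0`), every `x ∈ ℂ^{k+1}` and
every `φ` analytic near `F(x)` with finite order of vanishing satisfy
`ord_x(φ ∘ F) ≤ (k+1)·d·ord_{F(x)}(φ)`. -/
theorem ord_comp_polynomial_lift_le
    (k d : ℕ) (hd : 1 ≤ d)
    (P : Fin (k+1) → MvPolynomial (Fin (k+1)) ℂ)
    (hhom : ∀ i, (P i).IsHomogeneous d)
    (F : (Fin (k+1) → ℂ) → (Fin (k+1) → ℂ))
    (hF : ∀ x i, F x i = MvPolynomial.eval x (P i))
    (hzero : ∀ x : Fin (k+1) → ℂ, (∀ i, MvPolynomial.eval x (P i) = 0) → x = 0)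
    (x : Fin (k+1) → ℂ) (φ : (Fin (k+1) → ℂ) → ℂ)
    (hφ : AnalyticAt ℂ φ (F x)) (hφfin : ordAt φ (F x) ≠ ⊤) :
    ordAt (φ ∘ F) x ≤ (((k + 1) * d : ℕ) : ℕ∞) * ordAt φ (F x) := by
  obtain rfl : F = polyMap P := funext₂ hF
  refine (ord_comp_polynomial_lift_le_general (fun _ ↦ hd) hhom
    (fun x hx ↦ hzero x (congrFun hx)) hφ).trans ?_
  gcongr
  calc ∑ _ : Fin (k + 1), (d - 1) + 1 ≤ (k + 1) * (d - 1) + (k + 1) := by simp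
    _ = (k + 1) * d := by rw [← Nat.mul_succ, Nat.succ_eq_add_one, Nat.sub_add_cancel hd]
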